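/- Let $m\ge0$, $n\ge1$ be integers, $a>0$, $b>0$ reals with $\mu_0\le n$. Let $Q:[0,b]\to[0,\infty)$ be continuously differentiable with $Q\ge0$, and let $\psi:[0,a]\times[0,\infty)\to[0,b]$ be smooth on $(0,a)\times(0,\infty)$ and continuous up to the boundary, satisfying the $J$-flow equation $\partial_t\psi = Q(\psi)\Big(\partial_x^2\psi + \big(\tfrac{m}{x}+\tfrac{n}{1+x}\big)\partial_x\psi - \big(\tfrac{m}{x^2}+\tfrac{n}{(1+x)^2}\big)\psi - \tfrac{n}{(1+x)^2}\Big)$ with $\psi(0,t)=0$, $\psi(a,t)=b$, $\psi(x,0)=\tfrac{b}{a}x$. Assume moreover that for every $T>0$, $\sup_{(0,a)\times(0,T]}\Big|Q'(\psi)\Big(\partial_x^2\psi + \big(\tfrac{m}{x}+\tfrac{n}{1+x}\big)\partial_x\psi - \big(\tfrac{m}{x^2}+\tfrac{n}{(1+x)^2}\big)\psi - \tfrac{n}{(1+x)^2}\Big)\Big|<\infty$. Then $\partial_t\psi(x,t)\le0$ for all $(x,t)\in[0,a]\times[0,\infty)$. -/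

import Mathlib

/-- Oriented integral `I_{m,n,s}(x) = ∫_s^x tᵐ(1+t)ⁿ dt`. -/
noncomputable def Imns (m n : ℕ) (s x : ℝ) : ℝ := ∫ t in s..x, t ^ m * (1 + t) ^ n

/-- The slope `μ_0 = ((1+a)ⁿ aᵐ b + n I_{m,n-1}(a)) / I_{m,n}(a)`. -/
noncomputable def muZero (m n : ℕ) (a b : ℝ) : ℝ :=
  ((1 + a) ^ n * a ^ m * b + (n : ℝ) * Imns m (n - 1) 0 a) / Imns m n 0 a

open Set Filter Topology

/-- The condition `μ_0 ≤ n` forces `b ≤ a`. -/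
lemma le_of_muZero_le {m n : ℕ} (hn : 1 ≤ n) {a b : ℝ} (ha : 0 < a)
    (h0 : muZero m n a b ≤ n) : b ≤ a := by
  have hint : ∀ p q : ℕ, IntervalIntegrable (fun t : ℝ => t ^ p * (1 + t) ^ q)
      MeasureTheory.volume 0 a := fun p q =>
    (by fun_prop : Continuous fun t : ℝ => t ^ p * (1 + t) ^ q).intervalIntegrable _ _
  have hpos : 0 < Imns m n 0 a := by
    refine intervalIntegral.intervalIntegral_pos_of_pos_on (hint m n) (fun t ht => ?_) ha
    have := ht.1
    positivity
  rw [muZero, div_le_iff₀ hpos] at h0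
  obtain ⟨k, rfl⟩ : ∃ k, n = k + 1 := ⟨n - 1, by omega⟩
  rw [Nat.add_sub_cancel] at h0
  have hdiff : Imns m (k + 1) 0 a - Imns m k 0 a
      = ∫ t in (0 : ℝ)..a, t ^ (m + 1) * (1 + t) ^ k := by
    rw [Imns, Imns, ← intervalIntegral.integral_sub (hint _ _) (hint _ _)]
    congr 1
    ext t
    ring
  have hle : (∫ t in (0 : ℝ)..a, t ^ (m + 1) * (1 + t) ^ k)
      ≤ ∫ t in (0 : ℝ)..a, a ^ (m + 1) * (1 + t) ^ k := by
    refine intervalIntegral.integral_mono_on ha.le (hint _ _)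
      (Continuous.intervalIntegrable (by fun_prop) _ _) (fun t ht => ?_)
    have h1 := ht.1
    have h2 := ht.2
    gcongr
  have hval : (∫ t in (0 : ℝ)..a, a ^ (m + 1) * (1 + t) ^ k)
      = a ^ (m + 1) * (((1 + a) ^ (k + 1) - 1) / (k + 1)) := by
    rw [intervalIntegral.integral_const_mul,
      intervalIntegral.integral_comp_add_left (fun t => t ^ k) 1, integral_pow]
    simp
  rw [hval] at hle
  have hk : (0 : ℝ) < k + 1 := by positivity
  have hmul : ((k : ℝ) + 1) * (Imns m (k + 1) 0 a - Imns m k 0 a)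
      ≤ a ^ (m + 1) * ((1 + a) ^ (k + 1) - 1) := by
    rw [hdiff]
    calc _ ≤ ((k : ℝ) + 1) * (a ^ (m + 1) * (((1 + a) ^ (k + 1) - 1) / (k + 1))) := by gcongr
      _ = _ := by field_simp
  push_cast at h0
  have hc : 0 < (1 + a) ^ (k + 1) * a ^ m := by positivity
  have hp : 0 < a ^ (m + 1) := by positivity
  refine le_of_mul_le_mul_left ?_ hc
  have : (1 + a) ^ (k + 1) * a ^ m * a = a ^ (m + 1) * (1 + a) ^ (k + 1) := by ring
  rw [this]
  linarith

/-- Second-derivative test at a local maximum. -/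
lemma IsLocalMax.deriv_deriv_nonpos {f : ℝ → ℝ} {x : ℝ} (h : IsLocalMax f x)
    (hf : ContinuousAt f x) : deriv (deriv f) x ≤ 0 := by
  by_contra! hpos
  have hmin := isLocalMin_of_deriv_deriv_pos hpos h.deriv_eq_zero hf
  have hconst : f =ᶠ[𝓝 x] fun _ => f x := by
    filter_upwards [h, hmin] with y h1 h2 using le_antisymm h1 h2
  have : deriv (deriv f) x = 0 := by
    rw [hconst.deriv.deriv_eq]
    simp
  linarith

/-- A function that is bounded above on a left interval by its value at the right endpoint has
nonnegative derivative there. -/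
lemma HasDerivAt.nonneg_of_le_left {f : ℝ → ℝ} {f' r s : ℝ} (hf : HasDerivAt f f' s)
    (hrs : r < s) (h : ∀ σ ∈ Ioo r s, f σ ≤ f s) : 0 ≤ f' := by
  have ht := (hasDerivAt_iff_tendsto_slope_left_right.1 hf).1
  refine ge_of_tendsto ht ?_
  filter_upwards [Ioo_mem_nhdsLT hrs] with σ hσ
  rw [slope_def_field]
  exact div_nonneg_of_nonpos (by linarith [h σ hσ]) (by linarith [hσ.2])

/-- An antitone function on `[0, ∞)` has nonpositive (two-sided) derivative there. -/
lemma AntitoneOn.deriv_nonpos_Ici {f : ℝ → ℝ} (hf : AntitoneOn f (Ici 0)) {t : ℝ}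
    (ht : t ∈ Ici (0 : ℝ)) : deriv f t ≤ 0 := by
  by_cases hd : DifferentiableAt ℝ f t
  · rw [← hd.derivWithin (uniqueDiffOn_Ici 0 t ht)]
    exact hf.derivWithin_nonpos
  · exact (deriv_zero_of_not_differentiableAt hd).le

/-- Maximum principle for the elliptic part of the `J`-flow: at an interior nonnegative local
maximum of `u - w`, the elliptic operator at `u` is at most the one at `w`. -/
lemma elliptic_le_of_isLocalMax_sub {u w : ℝ → ℝ} {x A B c : ℝ} (hB : 0 ≤ B)
    (hu : ContDiffAt ℝ 2 u x) (hw : ContDiffAt ℝ 2 w x)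
    (hmax : IsLocalMax (fun y => u y - w y) x) (hpos : w x ≤ u x) :
    deriv (deriv u) x + A * deriv u x - B * u x - c
      ≤ deriv (deriv w) x + A * deriv w x - B * w x - c := by
  have hud := hu.differentiableAt (by norm_num)
  have hwd := hw.differentiableAt (by norm_num)
  have h1 : deriv u x - deriv w x = 0 := by
    rw [← deriv_fun_sub hud hwd]
    exact hmax.deriv_eq_zero
  have hdd : ∀ {g : ℝ → ℝ}, ContDiffAt ℝ 2 g x → DifferentiableAt ℝ (deriv g) x := fun hg =>
    (hg.derivWithin (m := 1) (by norm_num)).differentiableAt (by norm_num)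
  have h2 : deriv (deriv u) x - deriv (deriv w) x ≤ 0 := by
    have hev : deriv (fun y => u y - w y) =ᶠ[𝓝 x] fun y => deriv u y - deriv w y := by
      filter_upwards [hu.eventually (by simp), hw.eventually (by simp)] with y h1 h2
      exact deriv_fun_sub (h1.differentiableAt (by norm_num)) (h2.differentiableAt (by norm_num))
    rw [← deriv_fun_sub (hdd hu) (hdd hw), ← hev.deriv_eq]
    exact hmax.deriv_deriv_nonpos (hud.sub hwd).continuousAt
  have h3 := mul_nonneg hB (sub_nonneg.2 hpos)
  have h4 : A * deriv u x = A * deriv w x := by rw [sub_eq_zero.1 h1]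
  linarith

/-- Monotonicity along the `J`-flow under the Calabi ansatz with straight-line initial
data: if `μ_0 ≤ n`, `Q` is `C¹` and nonnegative on `[0,b]`, and
`ψ : [0,a] × [0,∞) → [0,b]` is smooth on `(0,a) × (0,∞)`, continuous up to the
boundary, solves `∂_t ψ = Q(ψ)(∂_x²ψ + (m/x + n/(1+x))∂_xψ - (m/x² + n/(1+x)²)ψ -
n/(1+x)²)` with `ψ(0,t) = 0`, `ψ(a,t) = b`, `ψ(x,0) = (b/a)x`, and for each `T > 0`
the quantity `Q'(ψ)(…)` is bounded on `(0,a) × (0,T]`, then `∂_t ψ ≤ 0` on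
`[0,a] × [0,∞)`. -/
theorem stmt_12 (m n : ℕ) (hn : 1 ≤ n) (a b : ℝ) (ha : 0 < a) (hb : 0 < b)
    (h0 : muZero m n a b ≤ n)
    (Q : ℝ → ℝ) (hQdiff : ContDiffOn ℝ 1 Q (Set.Icc 0 b))
    (hQnonneg : ∀ y ∈ Set.Icc (0:ℝ) b, 0 ≤ Q y)
    (ψ : ℝ → ℝ → ℝ)
    (hmaps : ∀ x ∈ Set.Icc (0:ℝ) a, ∀ t ∈ Set.Ici (0:ℝ), ψ x t ∈ Set.Icc 0 b)
    (hcont : ContinuousOn (fun p : ℝ × ℝ => ψ p.1 p.2) (Set.Icc 0 a ×ˢ Set.Ici 0))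
    (hsmooth : ContDiffOn ℝ (⊤ : ℕ∞) (fun p : ℝ × ℝ => ψ p.1 p.2) (Set.Ioo 0 a ×ˢ Set.Ioi 0))
    (hPDE : ∀ x ∈ Set.Ioo (0:ℝ) a, ∀ t ∈ Set.Ioi (0:ℝ),
      deriv (fun τ => ψ x τ) t = Q (ψ x t) *
        (deriv (fun y => deriv (fun z => ψ z t) y) x
          + ((m : ℝ) / x + (n : ℝ) / (1 + x)) * deriv (fun y => ψ y t) x
          - ((m : ℝ) / x ^ 2 + (n : ℝ) / (1 + x) ^ 2) * ψ x t
          - (n : ℝ) / (1 + x) ^ 2))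
    (hbd0 : ∀ t ∈ Set.Ici (0:ℝ), ψ 0 t = 0)
    (hbda : ∀ t ∈ Set.Ici (0:ℝ), ψ a t = b)
    (hinit : ∀ x ∈ Set.Icc (0:ℝ) a, ψ x 0 = (b / a) * x)
    (hbound : ∀ T > (0:ℝ), ∃ C : ℝ, ∀ x ∈ Set.Ioo (0:ℝ) a, ∀ t ∈ Set.Ioc (0:ℝ) T,
      |deriv Q (ψ x t) *
        (deriv (fun y => deriv (fun z => ψ z t) y) x
          + ((m : ℝ) / x + (n : ℝ) / (1 + x)) * deriv (fun y => ψ y t) x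
          - ((m : ℝ) / x ^ 2 + (n : ℝ) / (1 + x) ^ 2) * ψ x t
          - (n : ℝ) / (1 + x) ^ 2)| ≤ C) :
    ∀ x ∈ Set.Icc (0:ℝ) a, ∀ t ∈ Set.Ici (0:ℝ), deriv (fun τ => ψ x τ) t ≤ 0 := by
  have hba : b ≤ a := le_of_muZero_le hn ha h0
  have hsm : ∀ x ∈ Ioo 0 a, ∀ t ∈ Ioi (0 : ℝ),
      ContDiffAt ℝ (⊤ : ℕ∞) (fun p : ℝ × ℝ => ψ p.1 p.2) (x, t) := fun x hx t ht =>
    hsmooth.contDiffAt ((isOpen_Ioo.prod isOpen_Ioi).mem_nhds ⟨hx, ht⟩)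
  have hsx : ∀ x ∈ Ioo 0 a, ∀ t ∈ Ioi (0 : ℝ), ContDiffAt ℝ 2 (fun y => ψ y t) x :=
    fun x hx t ht => ((hsm x hx t ht).comp (f := fun y : ℝ => (y, t)) x
      (by fun_prop)).of_le (WithTop.coe_le_coe.2 (le_top : (2 : ℕ∞) ≤ ⊤))
  have hst : ∀ x ∈ Ioo 0 a, ∀ t ∈ Ioi (0 : ℝ), DifferentiableAt ℝ (fun τ => ψ x τ) t :=
    fun x hx t ht => ((hsm x hx t ht).comp (f := fun τ : ℝ => (x, τ)) t
      (by fun_prop)).differentiableAt (by simp)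
  have hlin : ∀ x ∈ Ioo 0 a, (fun y => ψ y 0) =ᶠ[𝓝 x] fun y => (b / a) * y := fun x hx => by
    filter_upwards [Ioo_mem_nhds hx.1 hx.2] with y hy using hinit y (Ioo_subset_Icc_self hy)
  suffices hanti : ∀ x ∈ Icc (0 : ℝ) a, AntitoneOn (fun τ => ψ x τ) (Ici 0) from
    fun x hx t ht => (hanti x hx).deriv_nonpos_Ici ht
  intro x₀ hx₀ t₀ ht₀ s₀ hs₀ hts₀
  by_contra! hlt
  rw [mem_Ici] at ht₀ hs₀
  obtain ⟨ε, hε, hεlt⟩ : ∃ ε > 0, ε * (s₀ + t₀) < ψ x₀ s₀ - ψ x₀ t₀ := by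
    refine ⟨(ψ x₀ s₀ - ψ x₀ t₀) / (s₀ + t₀ + 1), by apply div_pos <;> linarith, ?_⟩
    rw [div_mul_eq_mul_div, div_lt_iff₀ (by linarith)]
    nlinarith
  -- The maximum of `ψ x s - ψ x t - ε (s + t)` over `0 ≤ x ≤ a`, `0 ≤ t ≤ s ≤ s₀`.
  let K : Set (ℝ × ℝ × ℝ) := (Icc 0 a ×ˢ Icc 0 s₀ ×ˢ Icc 0 s₀) ∩ {p | p.2.1 ≤ p.2.2}
  have hK : IsCompact K := (isCompact_Icc.prod (isCompact_Icc.prod isCompact_Icc)).inter_right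
    (isClosed_le (by fun_prop) (by fun_prop))
  let Φ : ℝ × ℝ × ℝ → ℝ := fun p => ψ p.1 p.2.2 - ψ p.1 p.2.1 - ε * (p.2.2 + p.2.1)
  have hΦ : ContinuousOn Φ K := by
    refine ContinuousOn.sub (ContinuousOn.sub ?_ ?_) (by fun_prop)
    · exact hcont.comp (f := fun p : ℝ × ℝ × ℝ => (p.1, p.2.2)) (by fun_prop)
        fun p hp => ⟨hp.1.1, hp.1.2.2.1⟩
    · exact hcont.comp (f := fun p : ℝ × ℝ × ℝ => (p.1, p.2.1)) (by fun_prop)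
        fun p hp => ⟨hp.1.1, hp.1.2.1.1⟩
  have h₀K : (x₀, t₀, s₀) ∈ K := ⟨⟨hx₀, ⟨ht₀, hts₀⟩, ⟨hs₀, le_rfl⟩⟩, hts₀⟩
  obtain ⟨⟨x, t, s⟩, ⟨⟨hx, ht, hs⟩, hts⟩, hmax⟩ := hK.exists_isMaxOn ⟨_, h₀K⟩ hΦ
  have hΦpos : 0 < ψ x s - ψ x t - ε * (s + t) := by
    have : Φ (x₀, t₀, s₀) ≤ Φ (x, t, s) := hmax h₀K
    simp only [Φ] at this
    linarith
  have hmax' : ∀ x' ∈ Icc 0 a, ∀ t' ∈ Icc 0 s₀, ∀ s' ∈ Icc 0 s₀, t' ≤ s' →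
      ψ x' s' - ψ x' t' - ε * (s' + t') ≤ ψ x s - ψ x t - ε * (s + t) :=
    fun x' hx' t' ht' s' hs' h => hmax (show (x', t', s') ∈ K from ⟨⟨hx', ht', hs'⟩, h⟩)
  simp only at hx ht hs hts
  have hεst : 0 ≤ ε * (s + t) := mul_nonneg hε.le (add_nonneg hs.1 ht.1)
  have hlts : t < s := by
    refine lt_of_le_of_ne hts ?_
    rintro rfl
    linarith
  have hxI : x ∈ Ioo 0 a := by
    refine ⟨lt_of_le_of_ne hx.1 ?_, lt_of_le_of_ne hx.2 ?_⟩
    · rintro rfl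
      rw [hbd0 s hs.1, hbd0 t ht.1] at hΦpos
      linarith
    · rintro rfl
      rw [hbda s hs.1, hbda t ht.1] at hΦpos
      linarith
  have hxpos : 0 < x := hxI.1
  have hspos : s ∈ Ioi (0 : ℝ) := ht.1.trans_lt hlts
  have hvs : ε ≤ deriv (fun τ => ψ x τ) s := by
    have hd : HasDerivAt (fun τ => ψ x τ - ε * τ) (deriv (fun τ => ψ x τ) s - ε * 1) s :=
      (hst x hxI s hspos).hasDerivAt.sub ((hasDerivAt_id s).const_mul ε)
    have := hd.nonneg_of_le_left hlts fun σ hσ => by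
      have := hmax' x hx t ht σ ⟨ht.1.trans hσ.1.le, hσ.2.le.trans hs.2⟩ hσ.1.le
      linarith
    linarith
  have hFs : 0 < deriv (deriv fun y => ψ y s) x
      + ((m : ℝ) / x + (n : ℝ) / (1 + x)) * deriv (fun y => ψ y s) x
      - ((m : ℝ) / x ^ 2 + (n : ℝ) / (1 + x) ^ 2) * ψ x s - (n : ℝ) / (1 + x) ^ 2 := by
    rw [hPDE x hxI s hspos] at hvs
    exact pos_of_mul_pos_right (hε.trans_le hvs) (hQnonneg _ (hmaps x hx s hs.1))
  have hFt : deriv (deriv fun y => ψ y t) x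
      + ((m : ℝ) / x + (n : ℝ) / (1 + x)) * deriv (fun y => ψ y t) x
      - ((m : ℝ) / x ^ 2 + (n : ℝ) / (1 + x) ^ 2) * ψ x t - (n : ℝ) / (1 + x) ^ 2 ≤ 0 := by
    rcases ht.1.eq_or_lt with rfl | htpos
    · have hd : ∀ y, deriv (fun y => (b / a) * y) y = b / a := fun y => by
        simp
      rw [(hlin x hxI).deriv.deriv_eq, (hlin x hxI).deriv_eq, funext hd, hinit x hx,
        deriv_const]
      have : 0 + ((m : ℝ) / x + (n : ℝ) / (1 + x)) * (b / a)
          - ((m : ℝ) / x ^ 2 + (n : ℝ) / (1 + x) ^ 2) * (b / a * x) - (n : ℝ) / (1 + x) ^ 2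
          = (n : ℝ) / (1 + x) ^ 2 * (b / a - 1) := by
        field_simp
        ring
      rw [this]
      exact mul_nonpos_of_nonneg_of_nonpos (by positivity)
        (sub_nonpos.2 ((div_le_one ha).2 hba))
    · have hvt : deriv (fun τ => ψ x τ) t = -ε := by
        have hd : HasDerivAt (fun τ => -ψ x τ - ε * τ) (-deriv (fun τ => ψ x τ) t - ε * 1) t :=
          (hst x hxI t htpos).hasDerivAt.neg.sub ((hasDerivAt_id t).const_mul ε)
        have hloc : IsLocalMax (fun τ => -ψ x τ - ε * τ) t := by
          filter_upwards [Ioo_mem_nhds htpos hlts] with τ hτ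
          have := hmax' x hx τ ⟨hτ.1.le, hτ.2.le.trans hs.2⟩ s hs hτ.2.le
          linarith
        have := hloc.hasDerivAt_eq_zero hd
        linarith
      rw [hPDE x hxI t htpos] at hvt
      by_contra! hcon
      have := mul_nonneg (hQnonneg _ (hmaps x hx t ht.1)) hcon.le
      linarith
  have htx : ContDiffAt ℝ 2 (fun y => ψ y t) x := by
    rcases ht.1.eq_or_lt with rfl | htpos
    · exact ContDiffAt.congr_of_eventuallyEq (by fun_prop) (hlin x hxI)
    · exact hsx x hxI t htpos
  have hloc : IsLocalMax (fun y => ψ y s - ψ y t) x := by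
    filter_upwards [Ioo_mem_nhds hxI.1 hxI.2] with y hy
    have := hmax' y (Ioo_subset_Icc_self hy) t ht s hs hts
    linarith
  have hB : 0 ≤ (m : ℝ) / x ^ 2 + (n : ℝ) / (1 + x) ^ 2 := by positivity
  have := elliptic_le_of_isLocalMax_sub (A := (m : ℝ) / x + (n : ℝ) / (1 + x))
    (c := (n : ℝ) / (1 + x) ^ 2) hB (hsx x hxI s hspos) htx hloc (by linarith)
  linarith
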